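/- arXiv:2502.17031 — 3 statements merged into one kernel-verified Lean document; each statement's English description precedes it below -/
import Mathlib

section
/- Let 𝒜 be an essential central arrangement of k ≥ 4 distinct hyperplanes in ℂ⁴ (given by pairwise non-proportional nonzero linear forms α₁,…,α_k that span the dual space) such that 𝒜 has only double intersection lines, i.e., any three of the linear forms α_i are linearly independent. If the derivation module D(𝒜) is a free module over S = ℂ[x,y,z,w], then k = 4. -/
open MvPolynomial

noncomputable section

/-- The polynomial ring `S = ℂ[x,y,z,w]`, with `x = X 0`, `y = X 1`, `z = X 2`, `w = X 3`. -/
abbrev S4 : Type := MvPolynomial (Fin 4) ℂ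

/-- The linear form `c₀·x + c₁·y + c₂·z + c₃·w` with coefficient vector `c`. -/
noncomputable def linForm (c : Fin 4 → ℂ) : S4 := ∑ i, C (c i) * X i

/-- A polynomial derivation `θ = a₁∂ₓ + a₂∂_y + a₃∂_z + a₄∂_w` of `S` is identified with
its coefficient tuple `a : Fin 4 → S`; the linear map `derMap f` sends `a` to `θ(f)`. -/
noncomputable def derMap (f : S4) : (Fin 4 → S4) →ₗ[S4] S4 where
  toFun a := ∑ i, a i * pderiv i f
  map_add' a b := by simp [add_mul, Finset.sum_add_distrib]
  map_smul' c a := by simp [Finset.mul_sum, mul_assoc]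

/-- The derivation module `D(𝒜)` of the central arrangement whose hyperplanes are the kernels
of the linear forms `linForm (α H)`: all derivations `θ` with `θ(α_H) ∈ S·α_H` for every `H`. -/
noncomputable def derivModule {ι : Type} (α : ι → (Fin 4 → ℂ)) :
    Submodule S4 (Fin 4 → S4) :=
  ⨅ H, Submodule.comap (derMap (linForm (α H))) (Ideal.span {linForm (α H)})

end

theorem coeff_single_mul_linForm (c : Fin 4 → ℂ) (q : S4) (m : Fin 4) :
    coeff (Finsupp.single m 1) (q * linForm c) = constantCoeff q * c m := by
  classical
  have hX : ∀ i : Fin 4, coeff (Finsupp.single m 1) (q * (C (c i) * X i))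
      = if i = m then constantCoeff q * c i else 0 := by
    intro i
    rw [show q * (C (c i) * X i) = C (c i) * (q * X i) by ring, coeff_C_mul, coeff_mul_X']
    by_cases h : i = m
    · subst h
      simp [constantCoeff_eq, mul_comm]
    · simp [h]
  simp [linForm, Finset.mul_sum, coeff_sum, hX]

theorem constantCoeff_linForm (c : Fin 4 → ℂ) : constantCoeff (linForm c) = 0 := by
  simp [linForm]

theorem coeff_single_linForm (c : Fin 4 → ℂ) (m : Fin 4) :
    coeff (Finsupp.single m 1) (linForm c) = c m := by
  simpa using coeff_single_mul_linForm c 1 m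

theorem linForm_ne_zero {c : Fin 4 → ℂ} (hc : c ≠ 0) : linForm c ≠ 0 := by
  intro h
  apply hc
  ext m
  rw [← coeff_single_linForm c m, h]
  simp

theorem derMap_linForm (c : Fin 4 → ℂ) (a : Fin 4 → S4) :
    derMap (linForm c) a = ∑ i, a i * C (c i) := by
  classical
  simp only [derMap, linForm, LinearMap.coe_mk, AddHom.coe_mk]
  refine Finset.sum_congr rfl fun i _ => ?_
  congr 1
  simp [pderiv_X, Pi.single_apply]

theorem mem_derivModule_iff {ι : Type} (α : ι → (Fin 4 → ℂ)) (a : Fin 4 → S4) :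
    a ∈ derivModule α ↔ ∀ H, linForm (α H) ∣ ∑ i, a i * C (α H i) := by
  simp [derivModule, Submodule.mem_iInf, Ideal.mem_span_singleton, derMap_linForm]

/-- Linearly independent covectors admit a dual family of vectors. -/
theorem exists_dual_family {ι : Type} [Fintype ι] [DecidableEq ι] {c : ι → (Fin 4 → ℂ)}
    (hc : LinearIndependent ℂ c) :
    ∃ u : ι → (Fin 4 → ℂ), ∀ i j, ∑ m, c i m * u j m = if i = j then 1 else 0 := by
  have key : ∀ j, ∃ u : Fin 4 → ℂ, ∀ i, ∑ m, c i m * u m = if i = j then 1 else 0 := by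
    intro j
    obtain ⟨g, hg⟩ := (Finsupp.linearCombination ℂ c).exists_leftInverse_of_injective
      (by rw [LinearMap.ker_eq_bot]; exact hc)
    let F : (Fin 4 → ℂ) →ₗ[ℂ] ℂ := (Finsupp.lapply j) ∘ₗ g
    refine ⟨fun m => F (Pi.single m 1), fun i => ?_⟩
    have h1 : F (c i) = ∑ m, c i m * F (Pi.single m 1) := by
      conv_lhs => rw [pi_eq_sum_univ' (c i)]
      simp [map_sum]
    have h2 : g (c i) = Finsupp.single i 1 := by
      have := LinearMap.congr_fun hg (Finsupp.single i 1)
      simpa using this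
    rw [← h1]
    simp [F, h2, Finsupp.single_apply]
  choose u hu using key
  exact ⟨u, fun i j => hu j i⟩

/-- The ideal generated by linearly independent linear forms is prime. -/
theorem isPrime_span_linForm {ι : Type} [Fintype ι] {c : ι → (Fin 4 → ℂ)}
    (hc : LinearIndependent ℂ c) :
    (Ideal.span (Set.range fun i => linForm (c i))).IsPrime := by
  classical
  obtain ⟨u, hu⟩ := exists_dual_family hc
  set I := Ideal.span (Set.range fun i => linForm (c i)) with hI
  let ψ : S4 →ₐ[ℂ] S4 := aeval fun m => X m - ∑ j, C (u j m) * linForm (c j)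
  have hmod : ∀ f, f - ψ f ∈ I := by
    have hcomp : (Ideal.Quotient.mkₐ ℂ I).comp ψ = Ideal.Quotient.mkₐ ℂ I := by
      ext m
      simp only [ψ, AlgHom.comp_apply, aeval_X, Ideal.Quotient.mkₐ_eq_mk]
      rw [Ideal.Quotient.eq]
      simp only [sub_sub_cancel_left, neg_mem_iff]
      exact Ideal.sum_mem _ fun j _ => I.mul_mem_left _ (Ideal.subset_span ⟨j, rfl⟩)
    intro f
    have := AlgHom.congr_fun hcomp f
    simp only [AlgHom.comp_apply, Ideal.Quotient.mkₐ_eq_mk] at this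
    exact Ideal.Quotient.eq.mp this.symm
  have hker : I = RingHom.ker ψ := by
    apply le_antisymm
    · rw [hI, Ideal.span_le]
      rintro _ ⟨i, rfl⟩
      have h1 : ψ (linForm (c i)) =
          linForm (c i) - ∑ j, C (∑ m, c i m * u j m) * linForm (c j) := by
        conv_lhs => rw [linForm]
        simp only [map_sum, map_mul, ψ, aeval_X, algHom_C, mul_sub, Finset.sum_sub_distrib,
          Finset.mul_sum, Finset.sum_mul, algebraMap_eq]
        rw [Finset.sum_comm]
        simp only [linForm, mul_assoc]
      simp [RingHom.mem_ker, h1, hu]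
    · intro f hf
      have := hmod f
      rwa [(RingHom.mem_ker).mp hf, sub_zero] at this
  rw [hker]
  exact RingHom.ker_isPrime _

/-- A linear form in the ideal of other linear forms is a linear combination of them. -/
theorem mem_span_of_linForm_mem {ι : Type} [Fintype ι] {c : ι → (Fin 4 → ℂ)} {d : Fin 4 → ℂ}
    (h : linForm d ∈ Ideal.span (Set.range fun i => linForm (c i))) :
    d ∈ Submodule.span ℂ (Set.range c) := by
  obtain ⟨q, hq⟩ := (Ideal.mem_span_range_iff_exists_fun).mp h
  refine (Submodule.mem_span_range_iff_exists_fun ℂ).mpr ⟨fun i => constantCoeff (q i), ?_⟩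
  ext m
  rw [← coeff_single_linForm d m, ← hq]
  simp [coeff_sum, coeff_single_mul_linForm]

/-- If the ideals `I + (βⱼ)` are prime and contain no other `βᵢ`, their intersection is contained
in `I + (∏ βⱼ)`. -/
theorem mem_sup_span_prod {R ι : Type*} [CommRing R] [DecidableEq ι] (I : Ideal R) (β : ι → R)
    (T : Finset ι) (hprime : ∀ j ∈ T, (I ⊔ Ideal.span {β j}).IsPrime)
    (hnot : ∀ j ∈ T, ∀ i ∈ T, i ≠ j → β i ∉ I ⊔ Ideal.span {β j}) (r : R)
    (hr : ∀ j ∈ T, r ∈ I ⊔ Ideal.span {β j}) :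
    r ∈ I ⊔ Ideal.span {∏ j ∈ T, β j} := by
  induction T using Finset.induction_on with
  | empty => simp
  | insert j T hj ih =>
    have hrT := ih (fun i hi => hprime i (Finset.mem_insert_of_mem hi))
      (fun i hi l hl => hnot i (Finset.mem_insert_of_mem hi) l (Finset.mem_insert_of_mem hl))
      (fun i hi => hr i (Finset.mem_insert_of_mem hi))
    obtain ⟨s, hs, t, ht, hst⟩ := Submodule.mem_sup.mp hrT
    obtain ⟨g, rfl⟩ := Ideal.mem_span_singleton'.mp ht
    have hp := hprime j (Finset.mem_insert_self j T)
    have hgP : g * ∏ i ∈ T, β i ∈ I ⊔ Ideal.span {β j} := by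
      rw [← add_sub_cancel_left s (g * _), hst]
      exact Ideal.sub_mem _ (hr j (Finset.mem_insert_self j T)) (Ideal.mem_sup_left hs)
    have hg : g ∈ I ⊔ Ideal.span {β j} := by
      refine (hp.mem_or_mem hgP).resolve_right fun h => ?_
      obtain ⟨i, hi, hmem⟩ := (hp.prod_mem_iff).mp h
      exact hnot j (Finset.mem_insert_self j T) i (Finset.mem_insert_of_mem hi)
        (by rintro rfl; exact hj hi) hmem
    obtain ⟨s', hs', t', ht', hst'⟩ := Submodule.mem_sup.mp hg
    obtain ⟨g', rfl⟩ := Ideal.mem_span_singleton'.mp ht'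
    rw [← hst, ← hst', Finset.prod_insert hj]
    have : s + (s' + g' * β j) * ∏ i ∈ T, β i
        = (s + s' * ∏ i ∈ T, β i) + g' * (β j * ∏ i ∈ T, β i) := by ring
    rw [this]
    exact Ideal.add_mem _ (Ideal.mem_sup_left (I.add_mem hs (I.mul_mem_right _ hs')))
      (Ideal.mem_sup_right (Ideal.mul_mem_left _ _ (Ideal.mem_span_singleton_self _)))

theorem span_range_single (a : Fin 4 → ℂ) :
    Ideal.span (Set.range fun i => linForm (![a] i)) = ⊥ ⊔ Ideal.span {linForm a} := by
  simp [Set.range_unique]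

theorem span_range_pair (a b : Fin 4 → ℂ) :
    Ideal.span (Set.range fun i => linForm (![a, b] i)) =
      Ideal.span {linForm a} ⊔ Ideal.span {linForm b} := by
  rw [← Ideal.span_insert]
  congr 1
  ext x
  simp [eq_comm]

/-- If `∑ᵢ fᵢ vᵢ` is divisible by `α_H` whenever `v` lies in the hyperplane `H`, then the rational
one-form `Q⁻¹ ∑ᵢ fᵢ dxᵢ` is a combination of the `dα_H / α_H` and a polynomial one-form, provided
the arrangement has only double intersections in codimension two. -/
theorem exists_logarithmic_decomposition {ι : Type} [Fintype ι] [DecidableEq ι]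
    (α : ι → (Fin 4 → ℂ)) (hne : ∀ i, α i ≠ 0)
    (hpair : ∀ i j, i ≠ j → LinearIndependent ℂ ![α i, α j])
    (htriple : ∀ i j l, i ≠ j → i ≠ l → j ≠ l → LinearIndependent ℂ ![α i, α j, α l])
    (f : Fin 4 → S4)
    (hf : ∀ H (v : Fin 4 → ℂ), ∑ m, α H m * v m = 0 → linForm (α H) ∣ ∑ m, f m * C (v m)) :
    ∃ (g : ι → S4) (h : Fin 4 → S4), ∀ m, f m =
      ∑ H, g H * (∏ j ∈ Finset.univ.erase H, linForm (α j)) * C (α H m)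
        + (∏ j, linForm (α j)) * h m := by
  have hlocal : ∀ H, ∃ g : S4, ∀ m, linForm (α H) ∣
      f m - g * (∏ j ∈ Finset.univ.erase H, linForm (α j)) * C (α H m) := by
    intro H
    obtain ⟨u, hu⟩ := exists_dual_family
      (c := ![α H]) (linearIndependent_unique_iff.mpr (by simpa using hne H))
    have hu0 : ∑ m, α H m * u 0 m = 1 := by simpa using hu 0 0
    set r : S4 := ∑ m, f m * C (u 0 m) with hrdef
    have hres : ∀ m, linForm (α H) ∣ f m - r * C (α H m) := by
      intro m
      have := hf H (fun i => (if i = m then 1 else 0) - α H m * u 0 i) (by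
        simp only [mul_sub, Finset.sum_sub_distrib]
        rw [show ∑ x, α H x * (α H m * u 0 x) = α H m * ∑ x, α H x * u 0 x by
          rw [Finset.mul_sum]; exact Finset.sum_congr rfl fun _ _ => by ring]
        simp [hu0])
      convert this using 1
      simp only [map_sub, mul_sub, Finset.sum_sub_distrib, hrdef, Finset.sum_mul, map_mul]
      congr 1
      · rw [Finset.sum_eq_single m] <;> simp +contextual
      · exact Finset.sum_congr rfl fun _ _ => by ring
    have hr : r ∈ Ideal.span {linForm (α H)} ⊔
        Ideal.span {∏ j ∈ Finset.univ.erase H, linForm (α j)} := by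
      refine mem_sup_span_prod _ (fun j => linForm (α j)) _ ?_ ?_ _ ?_
      · intro j hj
        have := isPrime_span_linForm (hpair H j (Finset.ne_of_mem_erase hj).symm)
        rwa [span_range_pair] at this
      · intro j hj i hi hij hmem
        rw [← span_range_pair] at hmem
        have hd := mem_span_of_linForm_mem hmem
        have hli := htriple i H j (Finset.ne_of_mem_erase hi) hij
          (Finset.ne_of_mem_erase hj).symm
        exact (linearIndependent_finCons.mp hli).2 hd
      · intro j hj
        obtain ⟨w, hw⟩ := exists_dual_family (hpair H j (Finset.ne_of_mem_erase hj).symm)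
        have hw0 : ∑ m, α H m * w 0 m = 1 := by simpa using hw 0 0
        have hw1 : ∑ m, α j m * w 0 m = 0 := by simpa using hw 1 0
        have h1 := hf j (w 0) hw1
        have h2 : linForm (α H) ∣ (∑ m, f m * C (w 0 m)) - r := by
          have : (∑ m, f m * C (w 0 m)) - r = ∑ m, (f m - r * C (α H m)) * C (w 0 m) := by
            have h3 : ∑ m, C (α H m) * C (w 0 m) = (1 : S4) := by
              simp only [← map_mul, ← map_sum, hw0, map_one]
            simp only [sub_mul, Finset.sum_sub_distrib, mul_assoc, ← Finset.mul_sum, h3, mul_one]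
          rw [this]
          exact Finset.dvd_sum fun m _ => (hres m).mul_right _
        rw [← sub_sub_cancel (∑ m, f m * C (w 0 m)) r]
        exact Ideal.sub_mem _ (Ideal.mem_sup_right (Ideal.mem_span_singleton.mpr h1))
          (Ideal.mem_sup_left (Ideal.mem_span_singleton.mpr h2))
    obtain ⟨s, hs, t, ht, hst⟩ := Submodule.mem_sup.mp hr
    obtain ⟨g, rfl⟩ := Ideal.mem_span_singleton'.mp ht
    refine ⟨g, fun m => ?_⟩
    have h4 := (hres m).add ((Ideal.mem_span_singleton.mp hs).mul_right (C (α H m)))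
    convert h4 using 1
    rw [← hst]
    ring
  choose g hg using hlocal
  have hall : ∀ m, ∃ h, f m - ∑ H, g H * (∏ j ∈ Finset.univ.erase H, linForm (α j)) * C (α H m)
      = (∏ j, linForm (α j)) * h := by
    intro m
    have hmem := mem_sup_span_prod (⊥ : Ideal S4) (fun j => linForm (α j)) Finset.univ ?_ ?_
      (f m - ∑ H, g H * (∏ j ∈ Finset.univ.erase H, linForm (α j)) * C (α H m)) ?_
    · rw [bot_sup_eq, Ideal.mem_span_singleton] at hmem
      exact hmem
    · intro j _
      rw [← span_range_single]
      exact isPrime_span_linForm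
        (c := ![α j]) (linearIndependent_unique_iff.mpr (by simpa using hne j))
    · intro j _ i _ hij hmem
      rw [← span_range_single] at hmem
      exact (linearIndependent_finCons.mp (hpair i j hij)).2 (mem_span_of_linForm_mem hmem)
    · intro H _
      rw [bot_sup_eq, Ideal.mem_span_singleton, ← Finset.add_sum_erase _ _ (Finset.mem_univ H),
        ← sub_sub]
      refine (hg H m).sub (Finset.dvd_sum fun j hj => ?_)
      refine Dvd.dvd.mul_right (Dvd.dvd.mul_left ?_ _) _
      exact Finset.dvd_prod_of_mem _
        (Finset.mem_erase.mpr ⟨(Finset.ne_of_mem_erase hj).symm, Finset.mem_univ _⟩)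
  choose h hh using hall
  exact ⟨g, h, fun m => by rw [← hh m]; ring⟩

theorem prod_smul_mem_derivModule {ι : Type} [Fintype ι] (α : ι → (Fin 4 → ℂ)) (a : Fin 4 → S4) :
    (∏ j, linForm (α j)) • a ∈ derivModule α := by
  rw [mem_derivModule_iff]
  intro H
  simp only [Pi.smul_apply, smul_eq_mul, mul_assoc, ← Finset.mul_sum]
  exact (Finset.dvd_prod_of_mem _ (Finset.mem_univ H)).mul_right _

/-- For an essential arrangement, derivations in `derivModule α` vanish at the origin. -/
theorem constantCoeff_eq_zero_of_mem_derivModule {ι : Type} {α : ι → (Fin 4 → ℂ)}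
    (hess : Submodule.span ℂ (Set.range α) = ⊤) {a : Fin 4 → S4} (ha : a ∈ derivModule α)
    (m : Fin 4) : constantCoeff (a m) = 0 := by
  rw [mem_derivModule_iff] at ha
  let F : (Fin 4 → ℂ) →ₗ[ℂ] ℂ := Fintype.linearCombination ℂ fun i => constantCoeff (a i)
  have hF : F = 0 := by
    refine LinearMap.ext_on_range hess fun H => ?_
    obtain ⟨q, hq⟩ := ha H
    have := congrArg constantCoeff hq
    simpa [F, Fintype.linearCombination_apply, constantCoeff_linForm, mul_comm] using this
  have := LinearMap.congr_fun hF (Pi.single m 1)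
  simpa [F, Fintype.linearCombination_apply_single] using this

/-- The linear part of a derivation, as an endomorphism of the space of linear forms. -/
noncomputable def linearPart : (Fin 4 → S4) →ₗ[ℂ] Matrix (Fin 4) (Fin 4) ℂ where
  toFun a := Matrix.of fun m i => coeff (Finsupp.single m 1) (a i)
  map_add' a b := by ext; simp
  map_smul' c a := by ext; simp

theorem linearPart_mulVec {c : Fin 4 → ℂ} {a : Fin 4 → S4} {q : S4}
    (h : ∑ i, a i * C (c i) = linForm c * q) :
    (linearPart a).mulVec c = constantCoeff q • c := by
  ext m
  have := congrArg (coeff (Finsupp.single m 1)) h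
  rw [mul_comm, coeff_single_mul_linForm] at this
  simp only [mul_comm (a _), coeff_sum, coeff_C_mul] at this
  simpa [Matrix.mulVec, dotProduct, linearPart, mul_comm] using this

/-- A derivation in `derivModule α` with zero linear part lies in `𝔪 • D` as seen by every
linear functional. -/
theorem constantCoeff_functional_eq_zero {ι : Type} [Fintype ι]
    {α : ι → (Fin 4 → ℂ)} (hne : ∀ i, α i ≠ 0)
    (hpair : ∀ i j, i ≠ j → LinearIndependent ℂ ![α i, α j])
    (hess : Submodule.span ℂ (Set.range α) = ⊤)
    (htriple : ∀ i j l, i ≠ j → i ≠ l → j ≠ l → LinearIndependent ℂ ![α i, α j, α l])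
    (φ : derivModule α →ₗ[S4] S4) (a : derivModule α) (ha : linearPart a = 0) :
    constantCoeff (φ a) = 0 := by
  classical
  set Q : S4 := ∏ j, linForm (α j) with hQ
  have hQ0 : Q ≠ 0 := Finset.prod_ne_zero_iff.mpr fun j _ => linForm_ne_zero (hne j)
  have hQe : ∀ H, Q = linForm (α H) * ∏ j ∈ Finset.univ.erase H, linForm (α j) := fun H =>
    (Finset.mul_prod_erase _ _ (Finset.mem_univ H)).symm
  let f : Fin 4 → S4 := fun m =>
    φ ⟨Q • Pi.single m 1, prod_smul_mem_derivModule α _⟩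
  have hφ : ∀ b : derivModule α, Q * φ b = ∑ m, f m * (b : Fin 4 → S4) m := by
    intro b
    have hb : Q • b = ∑ m, (b : Fin 4 → S4) m •
        (⟨Q • Pi.single m 1, prod_smul_mem_derivModule α _⟩ : derivModule α) := by
      apply Subtype.ext
      ext1 i
      simp [Finset.sum_apply, Pi.single_apply, mul_comm]
    have := congrArg φ hb
    simp only [map_sum, map_smul, smul_eq_mul] at this
    rw [this]
    exact Finset.sum_congr rfl fun m _ => mul_comm _ _
  obtain ⟨g, h, hfg⟩ := exists_logarithmic_decomposition α hne hpair htriple f (by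
    intro H v hv
    have hmem : (∏ j ∈ Finset.univ.erase H, linForm (α j)) • (fun m => C (v m) : Fin 4 → S4)
        ∈ derivModule α := by
      rw [mem_derivModule_iff]
      intro H'
      simp only [Pi.smul_apply, smul_eq_mul, mul_assoc, ← Finset.mul_sum]
      by_cases hH : H' = H
      · subst hH
        have : ∑ i, C (v i) * C (α H' i) = (0 : S4) := by
          simp only [← map_mul, ← map_sum, mul_comm (v _), hv, map_zero]
        simp [this]
      · exact (Finset.dvd_prod_of_mem _
          (Finset.mem_erase.mpr ⟨hH, Finset.mem_univ _⟩)).mul_right _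
    refine ⟨φ ⟨_, hmem⟩, ?_⟩
    have hb := hφ ⟨_, hmem⟩
    have hP0 : (∏ j ∈ Finset.univ.erase H, linForm (α j)) ≠ 0 :=
      Finset.prod_ne_zero_iff.mpr fun j _ => linForm_ne_zero (hne j)
    apply mul_left_cancel₀ hP0
    rw [hQe H] at hb
    rw [← mul_assoc, mul_comm _ (linForm (α H)), hb, Finset.mul_sum]
    refine Finset.sum_congr rfl fun m _ => ?_
    simp only [Pi.smul_apply, smul_eq_mul]
    ring)
  choose q hq using (mem_derivModule_iff α a).mp a.2
  have hq0 : ∀ H, constantCoeff (q H) = 0 := by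
    intro H
    have := linearPart_mulVec (hq H)
    rw [ha, Matrix.zero_mulVec] at this
    exact (smul_eq_zero.mp this.symm).resolve_right (hne H)
  have hval : φ a = ∑ H, g H * q H + ∑ m, h m * (a : Fin 4 → S4) m := by
    apply mul_left_cancel₀ hQ0
    rw [hφ]
    simp only [hfg, add_mul, Finset.sum_add_distrib, mul_add, Finset.sum_mul, Finset.mul_sum]
    congr 1
    · rw [Finset.sum_comm]
      refine Finset.sum_congr rfl fun H _ => ?_
      rw [hQe H]
      calc _ = g H * (∏ j ∈ Finset.univ.erase H, linForm (α j)) *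
              ∑ i, (a : Fin 4 → S4) i * C (α H i) := by
            rw [Finset.mul_sum]; exact Finset.sum_congr rfl fun _ _ => by ring
        _ = _ := by rw [hq H]; ring
    · exact Finset.sum_congr rfl fun _ _ => by ring
  simp [hval, hq0, constantCoeff_eq_zero_of_mem_derivModule hess a.2]

/-- Linearly independent matrices for which every `α i` is an eigenvector: if there are four of
them, the `α i` spanning `ℂ⁴` are, up to proportionality, only four vectors. -/
theorem card_eq_four_of_common_eigenvectors {ι κ : Type} [Fintype ι] [Fintype κ]
    {α : ι → (Fin 4 → ℂ)} (hne : ∀ i, α i ≠ 0)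
    (hpair : ∀ i j, i ≠ j → LinearIndependent ℂ ![α i, α j])
    (hess : Submodule.span ℂ (Set.range α) = ⊤)
    (A : κ → Matrix (Fin 4) (Fin 4) ℂ) (hA : LinearIndependent ℂ A) (hκ : 4 ≤ Fintype.card κ)
    (heig : ∀ k i, ∃ μ : ℂ, (A k).mulVec (α i) = μ • α i) :
    Fintype.card ι = 4 := by
  classical
  choose μ hμ using heig
  obtain ⟨B, e, he, hspan, hli⟩ := exists_linearIndependent' ℂ α
  have : Fintype B := Fintype.ofInjective e he
  let b : Module.Basis B ℂ (Fin 4 → ℂ) := Module.Basis.mk hli (by rw [hspan, hess])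
  have hb : ∀ i, b i = α (e i) := fun i => by simp [b]
  have hB : Fintype.card B = 4 := by
    have := Module.finrank_eq_card_basis b
    simpa using this.symm
  have hμli : LinearIndependent ℂ fun k => (fun i => μ k (e i) : B → ℂ) := by
    rw [Fintype.linearIndependent_iff] at hA ⊢
    intro c hc
    apply hA c
    have hz : Matrix.mulVecLin (∑ k, c k • A k) = 0 := by
      refine b.ext fun i => ?_
      have hci := congrFun hc i
      simp only [Finset.sum_apply, Pi.smul_apply, smul_eq_mul, Pi.zero_apply] at hci
      simp [hb, hμ, smul_smul, ← Finset.sum_smul, hci]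
    ext i j
    have := congrFun (LinearMap.congr_fun hz (Pi.single j 1)) i
    simpa [Matrix.mulVecLin_apply, -map_sum, Matrix.mulVec_single_one] using this
  have htop : Submodule.span ℂ (Set.range fun k => (fun i => μ k (e i) : B → ℂ)) = ⊤ := by
    apply Submodule.eq_top_of_finrank_eq
    apply le_antisymm (Submodule.finrank_le _)
    rw [finrank_span_eq_card hμli]
    simpa [hB] using hκ
  have hsurj : Function.Surjective e := by
    intro H
    by_contra hH
    have hcoef : ∀ k i, b.repr (α H) i * (μ k (e i) - μ k H) = 0 := by
      intro k
      have h1 : ∑ i, (b.repr (α H) i * (μ k (e i) - μ k H)) • b i = 0 := by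
        simp only [mul_sub, sub_smul, Finset.sum_sub_distrib]
        rw [sub_eq_zero]
        have hsum := b.sum_repr (α H)
        calc ∑ i, (b.repr (α H) i * μ k (e i)) • b i
            = (A k).mulVecLin (∑ i, b.repr (α H) i • b i) := by
              simp [hb, hμ, smul_smul]
          _ = μ k H • ∑ i, b.repr (α H) i • b i := by
              rw [hsum, Matrix.mulVecLin_apply, hμ]
          _ = _ := by
              rw [Finset.smul_sum]
              exact Finset.sum_congr rfl fun i _ => by rw [smul_smul, mul_comm]
      exact Fintype.linearIndependent_iff.mp b.linearIndependent _ h1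
    obtain ⟨i, j, hij, hi, hj⟩ :
        ∃ i j, i ≠ j ∧ b.repr (α H) i ≠ 0 ∧ b.repr (α H) j ≠ 0 := by
      by_contra! hcon
      obtain ⟨i, hi⟩ : ∃ i, b.repr (α H) i ≠ 0 := by
        by_contra! h0
        exact hne H (b.repr.map_eq_zero_iff.mp (Finsupp.ext h0))
      have hsum := b.sum_repr (α H)
      rw [Finset.sum_eq_single i (fun j _ hji => by rw [hcon i j hji.symm hi, zero_smul])
        (by simp)] at hsum
      have hp := hpair H (e i) (fun h => hH ⟨i, h.symm⟩)
      rw [LinearIndependent.pair_iff] at hp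
      have := hp 1 (-(b.repr (α H) i)) (by rw [neg_smul, ← hb, hsum]; simp)
      exact one_ne_zero this.1
    have hle : Submodule.span ℂ (Set.range fun k => (fun i => μ k (e i) : B → ℂ)) ≤
        LinearMap.ker (LinearMap.proj (R := ℂ) (φ := fun _ : B => ℂ) i - LinearMap.proj j) := by
      rw [Submodule.span_le]
      rintro _ ⟨k, rfl⟩
      have h1 := (mul_eq_zero.mp (hcoef k i)).resolve_left hi
      have h2 := (mul_eq_zero.mp (hcoef k j)).resolve_left hj
      simp only [SetLike.mem_coe, LinearMap.mem_ker, LinearMap.sub_apply, LinearMap.proj_apply]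
      linear_combination h1 - h2
    rw [htop] at hle
    have := hle (x := Pi.single i 1) trivial
    simp [LinearMap.mem_ker, hij.symm] at this
  rw [← hB]
  exact (Fintype.card_of_bijective ⟨he, hsurj⟩).symm

theorem four_le_finrank_derivModule {ι : Type} [Fintype ι] {α : ι → (Fin 4 → ℂ)}
    (hne : ∀ i, α i ≠ 0) : 4 ≤ Module.finrank S4 (derivModule α) := by
  classical
  set Q : S4 := ∏ j, linForm (α j) with hQ
  have hQ0 : Q ≠ 0 := Finset.prod_ne_zero_iff.mpr fun j _ => linForm_ne_zero (hne j)
  let F : (Fin 4 → S4) →ₗ[S4] derivModule α :=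
    (LinearMap.lsmul S4 (Fin 4 → S4) Q).codRestrict _ fun a => prod_smul_mem_derivModule α a
  have hF : Function.Injective F := by
    intro a a' h
    have h' : Q • a = Q • a' := congrArg Subtype.val h
    exact smul_right_injective _ hQ0 h'
  simpa using LinearMap.finrank_le_finrank_of_injective hF

/-- An essential central arrangement of `k ≥ 4` distinct hyperplanes in `ℂ⁴`
having only double intersection lines (any three of the defining linear forms are linearly
independent) can be free only if `k = 4`. -/
theorem nonfree_of_only_double_lines {k : ℕ} (hk : 4 ≤ k) (α : Fin k → (Fin 4 → ℂ))
    (hne : ∀ i, α i ≠ 0)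
    (hpair : ∀ i j : Fin k, i ≠ j → LinearIndependent ℂ ![α i, α j])
    (hess : Submodule.span ℂ (Set.range α) = ⊤)
    (htriple : ∀ i j l : Fin k, i ≠ j → i ≠ l → j ≠ l →
      LinearIndependent ℂ ![α i, α j, α l])
    (hfree : Module.Free S4 ↥(derivModule α)) :
    k = 4 := by
  have hfin : Module.Finite S4 (derivModule α) := inferInstance
  let b := Module.finBasis S4 (derivModule α)
  have hli : LinearIndependent ℂ fun j => linearPart (b j : Fin 4 → S4) := by
    rw [Fintype.linearIndependent_iff]
    intro c hc j
    have hpart : linearPart ((∑ i, (C (c i) : S4) • b i : derivModule α) : Fin 4 → S4) = 0 := by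
      rw [← hc]
      simp only [Submodule.coe_sum, Submodule.coe_smul, map_sum]
      refine Finset.sum_congr rfl fun i _ => ?_
      rw [← map_smul]
      congr 1
      ext1 m
      simp [C_mul']
    have := constantCoeff_functional_eq_zero hne hpair hess htriple (b.coord j) _ hpart
    simpa [Finsupp.single_apply] using this
  have hcard := card_eq_four_of_common_eigenvectors hne hpair hess _ hli
    (by simpa using four_le_finrank_derivModule hne) (fun j H => by
      obtain ⟨q, hq⟩ := (mem_derivModule_iff α _).mp (b j).2 H
      exact ⟨_, linearPart_mulVec hq⟩)
  simpa using hcard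
end

section
/- The derivation module D(𝒜₃) of the central hyperplane arrangement 𝒜₃ in ℂ⁴ with defining equation Q₃ = x·y·z·w·(x+y)·(y+z)·(y−w)·(x−y−z+w) is not a free module over S = ℂ[x,y,z,w]. -/
open MvPolynomial

/-- The coefficient vectors of the eight linear factors of Q = xyzw(x+y)(y+z)(y-w)(x-y-z+w), defining the rigid Cynk–Szemberg octic arrangement 𝒜₃ ⊂ ℙ³. -/
noncomputable def A3 : Fin 8 → (Fin 4 → ℂ) :=
  ![![1, 0, 0, 0],
    ![0, 1, 0, 0],
    ![0, 0, 1, 0],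
    ![0, 0, 0, 1],
    ![1, 1, 0, 0],
    ![0, 1, 1, 0],
    ![0, 1, 0, -1],
    ![1, -1, -1, 1]]

/-- The point `[0 : 1 : -1 : 0]`, through which exactly the four planes `x`, `w`, `y + z` and
`x - y - z + w` of `A3` pass, in general position. -/
noncomputable def quadPoint : Fin 4 → ℂ := ![0, 1, -1, 0]

/-- Five functionals on derivations, given by first and second order jets at `quadPoint`.
On `derivModule A3` they factor through the fibre at `quadPoint`. -/
noncomputable def jets (a : Fin 4 → S4) : Fin 5 → ℂ :=
  ![eval quadPoint (a 1),
    eval quadPoint (pderiv 0 (a 0)),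
    eval quadPoint (pderiv 2 (pderiv 0 (a 0)))
      + eval quadPoint (pderiv 2 (pderiv 2 (a 0 - a 1 - a 2 + a 3))) / 2,
    eval quadPoint (pderiv 3 (pderiv 0 (a 0)))
      - eval quadPoint (pderiv 3 (pderiv 3 (a 0 - a 1 - a 2 + a 3))) / 2,
    eval quadPoint (pderiv 3 (pderiv 2 (a 1 + a 2)))
      - eval quadPoint (pderiv 3 (pderiv 3 (a 0 - a 1 - a 2 + a 3))) / 2]

theorem jets_add (a b : Fin 4 → S4) : jets (a + b) = jets a + jets b := by
  ext i
  fin_cases i <;> simp [jets] <;> ring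

theorem exists_quotients_of_mem_derivModule {a : Fin 4 → S4} (ha : a ∈ derivModule A3) :
    ∃ f g h k : S4, a 0 = X 0 * f ∧ a 1 + a 2 = (X 1 + X 2) * g ∧ a 3 = X 3 * h ∧
      a 0 - a 1 - a 2 + a 3 = (X 0 - X 1 - X 2 + X 3) * k := by
  rw [mem_derivModule_iff] at ha
  obtain ⟨f, hf⟩ := ha 0
  obtain ⟨g, hg⟩ := ha 5
  obtain ⟨h, hh⟩ := ha 3
  obtain ⟨k, hk⟩ := ha 7
  simp [A3, linForm, Fin.sum_univ_four] at hf hg hh hk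
  exact ⟨f, g, h, k, hf, hg, hh, by linear_combination hk⟩

theorem jets_smul (s : S4) {a : Fin 4 → S4} (ha : a ∈ derivModule A3) :
    jets (s • a) = eval quadPoint s • jets a := by
  obtain ⟨f, g, h, k, hf, hg, hh, hk⟩ := exists_quotients_of_mem_derivModule ha
  have rel : X 0 * f - (X 1 + X 2) * g + X 3 * h = (X 0 - X 1 - X 2 + X 3) * k := by
    rw [← hf, ← hg, ← hh, ← hk]; ring
  have hfk : eval quadPoint f = eval quadPoint k := by
    simpa [quadPoint, pderiv_X, Pi.single_apply] using
      congrArg (fun r => eval quadPoint (pderiv 0 r)) rel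
  have hgk : eval quadPoint g = eval quadPoint k := by
    simpa [quadPoint, pderiv_X, Pi.single_apply] using
      congrArg (fun r => eval quadPoint (pderiv 2 r)) rel
  have hk' : s * a 0 - s * a 1 - s * a 2 + s * a 3 = s * ((X 0 - X 1 - X 2 + X 3) * k) := by
    rw [← hk]; ring
  have hg' : s * a 1 + s * a 2 = s * ((X 1 + X 2) * g) := by rw [← hg]; ring
  ext i
  simp only [jets, Pi.smul_apply, smul_eq_mul, hk', hg', hk, hg]
  simp only [hf]
  simp only [quadPoint] at hfk hgk
  fin_cases i <;> simp [quadPoint, pderiv_X, hfk, hgk] <;> ring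

/-- The jets of a derivation in `derivModule A3`, as a map that is linear over evaluation at
`quadPoint`. -/
noncomputable def jetMap : ↥(derivModule A3) →ₛₗ[eval quadPoint] (Fin 5 → ℂ) where
  toFun a := jets a
  map_add' a b := jets_add a b
  map_smul' s a := jets_smul s a.2

/-- The product of the forms of `A3` that do not vanish at `quadPoint`. -/
noncomputable def offProduct : S4 := X 1 * X 2 * (X 0 + X 1) * (X 1 - X 3)

theorem offProduct_smul_mem {a : Fin 4 → S4} (hx : X 0 ∣ a 0) (hw : X 3 ∣ a 3)
    (hyz : X 1 + X 2 ∣ a 1 + a 2)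
    (hl : X 0 - X 1 - X 2 + X 3 ∣ a 0 - a 1 - a 2 + a 3) :
    offProduct • a ∈ derivModule A3 := by
  rw [mem_derivModule_iff]
  intro H
  have key : ∑ i, (offProduct • a) i * C (A3 H i) = offProduct * ∑ i, a i * C (A3 H i) := by
    simp [Finset.mul_sum, mul_assoc]
  rw [key]
  fin_cases H
  · exact Dvd.dvd.mul_left (by simpa [A3, linForm, Fin.sum_univ_four] using hx) _
  · exact Dvd.dvd.mul_right ⟨X 2 * (X 0 + X 1) * (X 1 - X 3), by
      simp [A3, linForm, Fin.sum_univ_four, offProduct]; ring⟩ _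
  · exact Dvd.dvd.mul_right ⟨X 1 * (X 0 + X 1) * (X 1 - X 3), by
      simp [A3, linForm, Fin.sum_univ_four, offProduct]; ring⟩ _
  · exact Dvd.dvd.mul_left (by simpa [A3, linForm, Fin.sum_univ_four] using hw) _
  · exact Dvd.dvd.mul_right ⟨X 1 * X 2 * (X 1 - X 3), by
      simp [A3, linForm, Fin.sum_univ_four, offProduct]; ring⟩ _
  · exact Dvd.dvd.mul_left (by simpa [A3, linForm, Fin.sum_univ_four] using hyz) _
  · exact Dvd.dvd.mul_right ⟨X 1 * X 2 * (X 0 + X 1), by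
      simp [A3, linForm, Fin.sum_univ_four, offProduct]; ring⟩ _
  · exact Dvd.dvd.mul_left
      (by simpa [A3, linForm, Fin.sum_univ_four, sub_eq_add_neg] using hl) _

theorem jetMap_surjective : Function.Surjective jetMap := by
  intro v
  let a : Fin 4 → S4 :=
    ![X 0 * (C (-v 1) + C (-v 2) * (X 1 + X 2) + C (-v 3) * X 3),
      C (v 1 - v 0) + C (-v 1) * X 1,
      C (v 0 - v 1) + C (-v 1) * X 2 + (X 1 + X 2) * (C (-v 2) * X 0 + C (-v 4) * X 3),
      X 3 * (C (-v 1) + C (v 3) * X 0 + C (-v 4) * (X 1 + X 2))]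
  have ha : offProduct • a ∈ derivModule A3 := by
    refine offProduct_smul_mem ⟨_, rfl⟩ ⟨_, rfl⟩
      ⟨C (-v 1) + (C (-v 2) * X 0 + C (-v 4) * X 3), ?_⟩ ⟨C (-v 1), ?_⟩
    · simp [a]; ring
    · simp [a]; ring
  refine ⟨⟨_, ha⟩, ?_⟩
  ext i
  change jets (offProduct • a) i = v i
  fin_cases i <;> simp [jets, a, offProduct, quadPoint, pderiv_X]

/-- The derivation module of 𝒜₃ is not a free `S`-module. -/
theorem not_free_A3 : ¬ Module.Free S4 ↥(derivModule A3) := by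
  intro hfree
  let b := Module.Free.chooseBasis S4 ↥(derivModule A3)
  have hli := b.linearIndependent.map' (derivModule A3).subtype (Submodule.ker_subtype _)
  have : Finite (Module.Free.ChooseBasisIndex S4 ↥(derivModule A3)) := hli.finite
  have := Fintype.ofFinite (Module.Free.ChooseBasisIndex S4 ↥(derivModule A3))
  have hcard := hli.fintype_card_le_finrank
  have : RingHomSurjective (eval quadPoint) := ⟨fun c => ⟨C c, eval_C c⟩⟩
  have hspan : Submodule.span ℂ (Set.range (jetMap ∘ b)) = ⊤ := by
    rw [Set.range_comp, ← Submodule.map_span, b.span_eq, Submodule.map_top,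
      LinearMap.range_eq_top.2 jetMap_surjective]
  have hrank := finrank_range_le_card (R := ℂ) (jetMap ∘ b)
  rw [Set.finrank, hspan, finrank_top] at hrank
  simp at hrank hcard
  omega
end

section
/- The derivation module D(𝒜₃₂) of the central hyperplane arrangement 𝒜₃₂ in ℂ⁴ with defining equation Q₃₂ = x·y·z·w·(x+y)·(y+z)·(x−y−z−w)·(x+y−z+w) is not a free module over S = ℂ[x,y,z,w]. -/
open MvPolynomial

/-- The coefficient vectors of the eight linear factors of Q = xyzw(x+y)(y+z)(x-y-z-w)(x+y-z+w), defining the rigid Cynk–Szemberg octic arrangement 𝒜₃₂ ⊂ ℙ³. -/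
noncomputable def A32 : Fin 8 → (Fin 4 → ℂ) :=
  ![![1, 0, 0, 0],
    ![0, 1, 0, 0],
    ![0, 0, 1, 0],
    ![0, 0, 0, 1],
    ![1, 1, 0, 0],
    ![0, 1, 1, 0],
    ![1, -1, -1, -1],
    ![1, 1, -1, 1]]

lemma pderiv_linForm (c : Fin 4 → ℂ) (i : Fin 4) : pderiv i (linForm c) = C (c i) := by
  simp [linForm, pderiv_X, Pi.single_apply]

lemma mem_derivModule {ι : Type} {α : ι → (Fin 4 → ℂ)} {a : Fin 4 → S4} :
    a ∈ derivModule α ↔ ∀ H, linForm (α H) ∣ ∑ i, a i * C (α H i) := by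
  simp [derivModule, Submodule.mem_iInf, Ideal.mem_span_singleton, derMap, pderiv_linForm]

/-- The point `(1, -1, 0, 0)`. The hyperplanes of `A32` through it are those of `x + y`, `z`, `w`
and `x + y - z + w`; any three of these four forms are linearly independent. -/
noncomputable def quadruplePoint : Fin 4 → ℂ := ![1, -1, 0, 0]

/-- Five functionals on tuples of polynomials. On `derivModule A32` they factor through the fibre
at `quadruplePoint`. -/
noncomputable def fibreCoords (a : Fin 4 → S4) : Fin 5 → ℂ :=
  ![eval quadruplePoint (pderiv 2 (pderiv 0 (a 0 + a 1)) - pderiv 2 (pderiv 3 (a 3))),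
    eval quadruplePoint (pderiv 3 (pderiv 0 (a 0 + a 1)) - pderiv 3 (pderiv 2 (a 2))),
    eval quadruplePoint (pderiv 0 (pderiv 2 (a 2)) - pderiv 0 (pderiv 3 (a 3))),
    eval quadruplePoint (pderiv 0 (a 0 + a 1)),
    eval quadruplePoint (a 1)]

lemma fibreCoords_add (a b : Fin 4 → S4) :
    fibreCoords (a + b) = fibreCoords a + fibreCoords b := by
  ext i
  fin_cases i <;> simp [fibreCoords] <;> ring

lemma fibreCoords_smul (g : S4) {a : Fin 4 → S4} (ha : a ∈ derivModule A32) :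
    fibreCoords (g • a) = eval quadruplePoint g • fibreCoords a := by
  rw [mem_derivModule] at ha
  obtain ⟨fz, hz⟩ := ha 2
  obtain ⟨fw, hw⟩ := ha 3
  obtain ⟨fu, hu⟩ := ha 4
  obtain ⟨fl, hl⟩ := ha 7
  simp [A32, linForm, Fin.sum_univ_four] at hz hw hu hl
  have ha0 : a 0 = (X 0 + X 1) * fu - a 1 := by rw [← hu]; ring
  have key : (X 0 + X 1) * fu - X 2 * fz + X 3 * fw = (X 0 + X 1 - X 2 + X 3) * fl := by
    rw [← hu, ← hz, ← hw]; linear_combination hl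
  have hx := congrArg (fun q => eval quadruplePoint (pderiv 0 q)) key
  have hz' := congrArg (fun q => eval quadruplePoint (pderiv 2 q)) key
  have hw' := congrArg (fun q => eval quadruplePoint (pderiv 3 q)) key
  simp [quadruplePoint, pderiv_X] at hx hz' hw'
  ext i
  fin_cases i <;>
    simp [fibreCoords, ha0, hz, hw, quadruplePoint, pderiv_X, hx, hz', hw'] <;> ring

/-- The functionals `fibreCoords`, as a map semilinear along evaluation at `quadruplePoint`. -/
noncomputable def fibreMap : ↥(derivModule A32) →ₛₗ[eval quadruplePoint] (Fin 5 → ℂ) where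
  toFun a := fibreCoords a
  map_add' a b := fibreCoords_add a b
  map_smul' g a := fibreCoords_smul g a.2

lemma fibreMap_surjective : Function.Surjective fibreMap := by
  intro v
  let h : S4 := X 0 * X 1 * (X 1 + X 2) * (X 0 - X 1 - X 2 - X 3)
  let u : S4 := X 0 + X 1
  let c₁ : S4 := C ((v 2 + v 0 - v 1) / 4)
  let c₂ : S4 := C ((v 2 - v 0 + v 1) / 4)
  let c₃ : S4 := C ((v 2 - v 0 - v 1) / 4)
  let d : S4 := C (-(v 4 + v 3) / 2)
  let e : S4 := C (v 3)
  let a : Fin 4 → S4 :=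
    ![e * X 0 + h * (c₁ * (u * X 2) + c₂ * (u * X 3) + d),
      e * X 1 - h * d,
      e * X 2 + h * (c₁ * (u * X 2) + c₃ * (X 2 * X 3)),
      e * X 3 + h * (c₃ * (X 2 * X 3) - c₂ * (u * X 3))]
  have ha : a ∈ derivModule A32 := by
    rw [mem_derivModule]
    intro H
    fin_cases H <;> simp [A32, linForm, Fin.sum_univ_four, a]
    · exact ⟨e + X 1 * (X 1 + X 2) * (X 0 - X 1 - X 2 - X 3) *
        (c₁ * (u * X 2) + c₂ * (u * X 3) + d), by ring⟩
    · exact ⟨e - X 0 * (X 1 + X 2) * (X 0 - X 1 - X 2 - X 3) * d, by ring⟩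
    · exact ⟨e + h * (c₁ * u + c₃ * X 3), by ring⟩
    · exact ⟨e + h * (c₃ * X 2 - c₂ * u), by ring⟩
    · exact ⟨e + h * (c₁ * X 2 + c₂ * X 3), by ring⟩
    · exact ⟨e + X 0 * X 1 * (X 0 - X 1 - X 2 - X 3) *
        (c₁ * (u * X 2) + c₃ * (X 2 * X 3) - d), by ring⟩
    · exact ⟨e + X 0 * X 1 * (X 1 + X 2) *
        (2 * (d + c₂ * (u * X 3) - c₃ * (X 2 * X 3))), by ring⟩
    · exact ⟨e, by ring⟩
  refine ⟨⟨a, ha⟩, ?_⟩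
  change fibreCoords a = v
  ext i
  fin_cases i <;>
    simp [fibreCoords, a, h, u, c₁, c₂, c₃, d, e, quadruplePoint, pderiv_X] <;> ring

/-- The derivation module of 𝒜₃₂ is not a free `S`-module. -/
theorem not_free_A32 : ¬ Module.Free S4 ↥(derivModule A32) := by
  intro hfree
  let b := Module.Free.chooseBasis S4 ↥(derivModule A32)
  have hli : LinearIndependent S4 fun i => (b i : Fin 4 → S4) :=
    b.linearIndependent.map' (derivModule A32).subtype (Submodule.ker_subtype _)
  have : Finite (Module.Free.ChooseBasisIndex S4 ↥(derivModule A32)) := hli.finite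
  have := Fintype.ofFinite (Module.Free.ChooseBasisIndex S4 ↥(derivModule A32))
  have hcard := hli.fintype_card_le_finrank
  have hspan : Submodule.span ℂ (Set.range fun i => fibreMap (b i)) = ⊤ := by
    refine eq_top_iff.2 fun v _ => ?_
    obtain ⟨a, rfl⟩ := fibreMap_surjective v
    rw [← b.sum_repr a, map_sum]
    refine Submodule.sum_mem _ fun i _ => ?_
    rw [map_smulₛₗ]
    exact Submodule.smul_mem _ _ (Submodule.subset_span ⟨i, rfl⟩)
  have hle := finrank_range_le_card (R := ℂ) fun i => fibreMap (b i)
  rw [Set.finrank, hspan, finrank_top] at hle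
  simp only [Module.finrank_fintype_fun_eq_card, Fintype.card_fin] at hle hcard
  omega
end
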